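/- arXiv:1209.4209 — 4 statements merged into one kernel-verified Lean document; each statement's English description precedes it below -/
import Mathlib

section
/- Let n ≤ q be positive integers, let μ be the probability measure on n×q real matrices under which all entries are i.i.d. standard Gaussian N(0,1), and let R be a q×q real symmetric positive semidefinite matrix all of whose eigenvalues are at least σ for some σ > 0. Then ∫ log det(I_n + X R Xᵀ) dμ(X) ≥ n · log(1 + σ · exp((1/n) · Σ_{j=0}^{n-1} (ψ((q−j)/2) + log 2))), where ψ denotes the digamma function ψ(a) = deriv (log ∘ Γ) a on positive reals. -/
open MeasureTheory ProbabilityTheory Matrix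

open Set in
/-- The integrand of the derivative of the Gamma integral is integrable. -/
theorem integrableOn_rpow_mul_log_mul_exp_neg {a : ℝ} (ha : 0 < a) :
    IntegrableOn (fun t : ℝ => t ^ (a - 1) * (Real.log t * Real.exp (-t))) (Ioi 0) := by
  have h := (mellin_hasDerivAt_of_isBigO_rpow (E := ℂ) (f := fun x : ℝ => (Real.exp (-x) : ℂ))
    (a := a + 1) (b := 0) (s := (a : ℂ)) ?_ ?_ (by simp) ?_ (by simpa using ha)).1
  · rw [MellinConvergent] at h
    have h2 := h.re
    refine (integrableOn_congr_fun (fun t ht => ?_) measurableSet_Ioi).mp h2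
    have ht' : (0 : ℝ) ≤ t := le_of_lt ht
    rw [show ((a : ℂ) - 1) = ((a - 1 : ℝ) : ℂ) by push_cast; ring, ← Complex.ofReal_cpow ht']
    simp only [smul_eq_mul, Complex.real_smul, ← Complex.ofReal_mul]
    exact Complex.ofReal_re _
  · refine (Continuous.continuousOn ?_).locallyIntegrableOn measurableSet_Ioi
    exact Complex.continuous_ofReal.comp (Real.continuous_exp.comp continuous_neg)
  · rw [← Asymptotics.isBigO_norm_left]
    simp_rw [Complex.norm_real, Asymptotics.isBigO_norm_left]
    simpa only [neg_one_mul] using (isLittleO_exp_neg_mul_rpow_atTop zero_lt_one _).isBigO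
  · simp_rw [neg_zero, Real.rpow_zero]
    refine Asymptotics.isBigO_const_of_tendsto (y := (1 : ℂ)) ?_ one_ne_zero
    rw [(by simp : (1 : ℂ) = Real.exp (-0))]
    exact (Complex.continuous_ofReal.comp
      (Real.continuous_exp.comp continuous_neg)).continuousWithinAt

open Set in
/-- The derivative of the Gamma integral, expressed through the digamma function. -/
theorem integral_rpow_mul_log_mul_exp_neg {a : ℝ} (ha : 0 < a) :
    ∫ t in Ioi (0 : ℝ), t ^ (a - 1) * (Real.log t * Real.exp (-t)) =
      deriv (Real.log ∘ Real.Gamma) a * Real.Gamma a := by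
  have hC := Complex.hasDerivAt_GammaIntegral (s := (a : ℂ)) (by simpa using ha)
  have hC' : HasDerivAt Complex.Gamma
      ((∫ t in Ioi (0 : ℝ), t ^ (a - 1) * (Real.log t * Real.exp (-t)) : ℝ) : ℂ) (a : ℂ) := by
    refine (hC.congr_of_eventuallyEq ?_).congr_deriv ?_
    · have : IsOpen {s : ℂ | 0 < s.re} := Complex.continuous_re.isOpen_preimage _ isOpen_Ioi
      filter_upwards [this.mem_nhds (show 0 < (a : ℂ).re by simpa using ha)] with s hs
      exact Complex.Gamma_eq_integral hs
    · rw [← integral_complex_ofReal]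
      refine setIntegral_congr_fun measurableSet_Ioi fun t ht => ?_
      have ht' : (0 : ℝ) ≤ t := le_of_lt ht
      simp only [Complex.ofReal_mul, Complex.ofReal_cpow ht']
      push_cast
      ring
  have hR := hC'.real_of_complex
  simp only [Complex.ofReal_re] at hR
  have hlog : HasDerivAt (Real.log ∘ Real.Gamma) _ a :=
    (Real.hasDerivAt_log (Real.Gamma_pos_of_pos ha).ne').comp a hR
  rw [hlog.deriv]
  have := (Real.Gamma_pos_of_pos ha).ne'
  field_simp

section
open Set Module
variable {E : Type*} [NormedAddCommGroup E] [InnerProductSpace ℝ E] [FiniteDimensional ℝ E]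
  [MeasurableSpace E] [BorelSpace E]

theorem integrable_comp_norm_sq_iff [Nontrivial E] (h : ℝ → ℝ) :
    Integrable (fun x : E => h (‖x‖ ^ 2)) ↔
      IntegrableOn (fun t : ℝ => t ^ ((finrank ℝ E : ℝ) / 2 - 1) * h (2 * t)) (Ioi 0) := by
  rw [integrable_fun_norm_addHaar volume (f := fun r => h (r ^ 2))]
  have hd : 0 < finrank ℝ E := finrank_pos
  have e1 := integrableOn_Ioi_comp_rpow_iff'
    (fun y : ℝ => y ^ ((finrank ℝ E : ℝ) / 2 - 1) * h y) (two_ne_zero (α := ℝ))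
  have e2 := integrableOn_Ioi_comp_mul_left_iff
    (fun y : ℝ => y ^ ((finrank ℝ E : ℝ) / 2 - 1) * h y) 0 (two_pos (α := ℝ))
  rw [mul_zero, ← e1] at e2
  have e3 : IntegrableOn (fun t : ℝ => (2 * t) ^ ((finrank ℝ E : ℝ) / 2 - 1) * h (2 * t)) (Ioi 0) ↔
      IntegrableOn (fun t : ℝ => t ^ ((finrank ℝ E : ℝ) / 2 - 1) * h (2 * t)) (Ioi 0) := by
    have hc : (2 : ℝ) ^ ((finrank ℝ E : ℝ) / 2 - 1) ≠ 0 := by positivity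
    rw [IntegrableOn, IntegrableOn, ← integrable_smul_iff hc fun t : ℝ => t ^ _ * h (2 * t)]
    refine integrableOn_congr_fun (fun t ht => ?_) measurableSet_Ioi
    have ht' : (0 : ℝ) ≤ t := le_of_lt ht
    simp only [Pi.smul_apply, smul_eq_mul]
    rw [Real.mul_rpow zero_le_two ht', mul_assoc]
  rw [← e3, e2]
  refine integrableOn_congr_fun (fun r hr => ?_) measurableSet_Ioi
  have hr' : (0 : ℝ) < r := hr
  simp only [smul_eq_mul, Real.rpow_ofNat]
  rw [← mul_assoc, ← Real.rpow_natCast r 2, ← Real.rpow_mul hr'.le, ← Real.rpow_add hr',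
    ← Real.rpow_natCast, Nat.cast_sub hd]
  push_cast
  congr 2
  ring

variable (E) in
/-- Polar coordinates for functions of `‖x‖ ^ 2`, with the radial variable `t = ‖x‖ ^ 2 / 2`. -/
theorem exists_integral_comp_norm_sq [Nontrivial E] : ∃ K : ℝ, ∀ h : ℝ → ℝ,
    ∫ x : E, h (‖x‖ ^ 2) =
      K * ∫ t in Ioi (0 : ℝ), t ^ ((finrank ℝ E : ℝ) / 2 - 1) * h (2 * t) := by
  have hd : 0 < finrank ℝ E := finrank_pos
  refine ⟨finrank ℝ E * (volume : Measure E).real (Metric.ball 0 1) *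
    (2 : ℝ) ^ ((finrank ℝ E : ℝ) / 2 - 1), fun h => ?_⟩
  rw [integral_fun_norm_addHaar volume (f := fun r => h (r ^ 2))]
  have e1 := integral_comp_rpow_Ioi_of_pos
    (g := fun y : ℝ => y ^ ((finrank ℝ E : ℝ) / 2 - 1) * h y) (two_pos (α := ℝ))
  have e2 := integral_comp_mul_left_Ioi
    (fun y : ℝ => y ^ ((finrank ℝ E : ℝ) / 2 - 1) * h y) 0 (two_pos (α := ℝ))
  rw [mul_zero, ← e1] at e2
  have e3 : ∫ t in Ioi (0 : ℝ), (2 * t) ^ ((finrank ℝ E : ℝ) / 2 - 1) * h (2 * t) =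
      (2 : ℝ) ^ ((finrank ℝ E : ℝ) / 2 - 1) *
        ∫ t in Ioi (0 : ℝ), t ^ ((finrank ℝ E : ℝ) / 2 - 1) * h (2 * t) := by
    rw [← integral_const_mul]
    refine setIntegral_congr_fun measurableSet_Ioi fun t ht => ?_
    have ht' : (0 : ℝ) ≤ t := le_of_lt ht
    rw [Real.mul_rpow zero_le_two ht', mul_assoc]
  rw [mul_assoc, ← e3, e2, nsmul_eq_mul, smul_eq_mul, ← mul_assoc, smul_eq_mul,
    ← integral_const_mul 2⁻¹]
  congr 1
  refine setIntegral_congr_fun measurableSet_Ioi fun r hr => ?_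
  have hr' : (0 : ℝ) < r := hr
  simp only [smul_eq_mul]
  rw [show (2 : ℝ) - 1 = 1 by norm_num, Real.rpow_one, Real.rpow_ofNat,
    ← Real.rpow_natCast r 2, ← Real.rpow_mul hr'.le, mul_assoc, mul_left_comm r,
    ← Real.rpow_natCast, Nat.cast_sub hd]
  rw [show ((finrank ℝ E : ℝ) - (1 : ℕ)) = (((2 : ℕ) : ℝ) * ((finrank ℝ E : ℝ) / 2 - 1)) + 1 by
    push_cast; ring, Real.rpow_add hr', Real.rpow_one]
  ring

/-- The density of the standard Gaussian measure on a Euclidean space. -/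
theorem stdGaussian_eq_withDensity :
    stdGaussian E = (volume : Measure E).withDensity fun x => ENNReal.ofReal
      ((2 * Real.pi) ^ (-(finrank ℝ E / 2 : ℝ)) * Real.exp (-(‖x‖ ^ 2 / 2))) := by
  have hInt : Integrable fun x : E =>
      (2 * Real.pi) ^ (-(finrank ℝ E / 2 : ℝ)) * Real.exp (-(‖x‖ ^ 2 / 2)) := by
    have h := (GaussianFourier.integrable_cexp_neg_mul_sq_norm_add (V := E) (b := 1 / 2)
      (by norm_num) 0 0).re
    refine (h.congr (ae_of_all _ fun x => ?_)).const_mul _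
    have e : -(1 / 2 : ℂ) * (‖x‖ : ℂ) ^ 2 + 0 * ((inner ℝ (0 : E) x : ℝ) : ℂ) =
        ((-(‖x‖ ^ 2 / 2) : ℝ) : ℂ) := by push_cast; ring
    simp only [e, ← Complex.ofReal_exp]
    exact Complex.ofReal_re _
  have : IsFiniteMeasure ((volume : Measure E).withDensity fun x => ENNReal.ofReal
      ((2 * Real.pi) ^ (-(finrank ℝ E / 2 : ℝ)) * Real.exp (-(‖x‖ ^ 2 / 2)))) :=
    isFiniteMeasure_withDensity_ofReal hInt.2
  refine Measure.ext_of_charFun (funext fun t => ?_)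
  rw [charFun_stdGaussian, charFun_apply, integral_withDensity_eq_integral_toReal_smul
    (by fun_prop) (by simp)]
  have h := GaussianFourier.integral_cexp_neg_mul_sq_norm_add (b := 1 / 2) (by norm_num)
    Complex.I t
  have hpos : 0 < 2 * Real.pi := by positivity
  have e : ∀ x : E, (ENNReal.ofReal
      ((2 * Real.pi) ^ (-(finrank ℝ E / 2 : ℝ)) * Real.exp (-(‖x‖ ^ 2 / 2)))).toReal •
        Complex.exp (inner ℝ x t * Complex.I) =
      (((2 * Real.pi) ^ (-(finrank ℝ E / 2 : ℝ)) : ℝ) : ℂ) *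
        Complex.exp (-(1 / 2) * ‖x‖ ^ 2 + Complex.I * inner ℝ t x) := by
    intro x
    rw [ENNReal.toReal_ofReal (by positivity), Complex.real_smul, Complex.ofReal_mul, mul_assoc,
      Complex.ofReal_exp, ← Complex.exp_add, real_inner_comm]
    congr 2
    push_cast
    ring
  simp_rw [e]
  rw [integral_const_mul, h]
  have : ((Real.pi : ℂ) / (1 / 2)) ^ ((finrank ℝ E : ℂ) / 2) =
      (((2 * Real.pi) ^ (finrank ℝ E / 2 : ℝ) : ℝ) : ℂ) := by
    rw [Complex.ofReal_cpow hpos.le]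
    push_cast
    congr 1
    ring
  rw [this, ← mul_assoc, ← Complex.ofReal_mul, ← Real.rpow_add hpos]
  rw [neg_add_cancel, Real.rpow_zero, Complex.ofReal_one, one_mul, Complex.I_sq]
  congr 1
  ring

variable (E) in
/-- The expectation of the logarithm of a chi-squared variable with `finrank ℝ E` degrees of
freedom. -/
theorem log_norm_sq_stdGaussian [Nontrivial E] :
    Integrable (fun x : E => Real.log (‖x‖ ^ 2)) (stdGaussian E) ∧
      ∫ x : E, Real.log (‖x‖ ^ 2) ∂(stdGaussian E) =
        deriv (Real.log ∘ Real.Gamma) ((finrank ℝ E : ℝ) / 2) + Real.log 2 := by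
  have hd : (0 : ℝ) < (finrank ℝ E : ℝ) / 2 := by
    have : 0 < finrank ℝ E := finrank_pos
    positivity
  set a : ℝ := (finrank ℝ E : ℝ) / 2 with ha
  set c : ℝ := (2 * Real.pi) ^ (-a) with hc
  have hc0 : 0 ≤ c := by positivity
  have hdens : stdGaussian E = (volume : Measure E).withDensity fun x => ENNReal.ofReal
      (c * Real.exp (-(‖x‖ ^ 2 / 2))) := stdGaussian_eq_withDensity
  obtain ⟨K, hK⟩ := exists_integral_comp_norm_sq E
  have hI (h : ℝ → ℝ) : ∫ x : E, h (‖x‖ ^ 2) ∂(stdGaussian E) =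
      K * ∫ t in Ioi (0 : ℝ), t ^ (a - 1) * (c * Real.exp (-t) * h (2 * t)) := by
    rw [hdens, integral_withDensity_eq_integral_toReal_smul (by fun_prop) (by simp)]
    have := hK fun y => c * Real.exp (-(y / 2)) * h y
    simp only [mul_div_cancel_left₀ _ (two_ne_zero (α := ℝ))] at this
    rw [← this]
    refine integral_congr_ae (ae_of_all _ fun x => ?_)
    simp only [smul_eq_mul]
    rw [ENNReal.toReal_ofReal (by positivity)]
  have hG : ∫ t in Ioi (0 : ℝ), t ^ (a - 1) * Real.exp (-t) = Real.Gamma a := by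
    rw [Real.Gamma_eq_integral hd]
    simp_rw [mul_comm]
  have hGi : IntegrableOn (fun t : ℝ => t ^ (a - 1) * Real.exp (-t)) (Ioi 0) := by
    simpa only [mul_comm] using Real.GammaIntegral_convergent hd
  have hone : K * (c * Real.Gamma a) = 1 := by
    have := hI fun _ => 1
    rw [integral_const, probReal_univ, one_smul] at this
    rw [this, ← hG, ← integral_const_mul]
    congr 2 with t
    ring
  have hlogi := integrableOn_rpow_mul_log_mul_exp_neg hd
  have hsplit : ∀ t ∈ Ioi (0 : ℝ), t ^ (a - 1) * (c * Real.exp (-t) * Real.log (2 * t)) =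
      c * (t ^ (a - 1) * (Real.log t * Real.exp (-t)) +
        Real.log 2 * (t ^ (a - 1) * Real.exp (-t))) := by
    intro t ht
    rw [Real.log_mul two_ne_zero (ne_of_gt ht)]
    ring
  constructor
  · rw [hdens, integrable_withDensity_iff_integrable_smul' (by fun_prop) (by simp)]
    have := (integrable_comp_norm_sq_iff (E := E)
      fun y => c * Real.exp (-(y / 2)) * Real.log y).2 ?_
    · refine this.congr (ae_of_all _ fun x => ?_)
      simp only [smul_eq_mul]
      rw [ENNReal.toReal_ofReal (by positivity)]
    · simp only [mul_div_cancel_left₀ _ (two_ne_zero (α := ℝ))]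
      refine (integrableOn_congr_fun hsplit measurableSet_Ioi).2 ?_
      exact (hlogi.add (hGi.const_mul _)).const_mul _
  · rw [hI Real.log, setIntegral_congr_fun measurableSet_Ioi hsplit, integral_const_mul,
      integral_add hlogi (hGi.const_mul _), integral_const_mul, hG,
      integral_rpow_mul_log_mul_exp_neg hd]
    linear_combination (deriv (Real.log ∘ Real.Gamma) a + Real.log 2) * hone

end

section
open Set Module
variable {E : Type*} [NormedAddCommGroup E] [InnerProductSpace ℝ E]

/-- Adding a vector multiplies the Gram determinant by its squared distance to the span. -/
theorem det_gram_cons [FiniteDimensional ℝ E] {n : ℕ} (x : E) (v : Fin n → E) :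
    (gram ℝ (Fin.cons x v : Fin (n + 1) → E)).det =
      (gram ℝ v).det * ‖(Submodule.span ℝ (range v))ᗮ.orthogonalProjectionOnto x‖ ^ 2 := by
  set V := Submodule.span ℝ (range v)
  set z : E := Vᗮ.orthogonalProjectionOnto x with hz
  have hzV : z ∈ Vᗮ := Submodule.coe_mem _
  have hy : x - z ∈ V := by
    have := Submodule.sub_starProjection_mem_orthogonal (K := Vᗮ) x
    rwa [Submodule.orthogonal_orthogonal] at this
  obtain ⟨c, hc⟩ := (Submodule.mem_span_range_iff_exists_fun ℝ).1 hy
  set G := gram ℝ (Fin.cons x v : Fin (n + 1) → E) with hG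
  have h1 := det_updateRow_sum G 0 (Fin.cons 1 fun i => -c i)
  have hrow : (∑ k, (Fin.cons 1 fun i => -c i : Fin (n + 1) → ℝ) k • G k) =
      Fin.cons (‖z‖ ^ 2) 0 := by
    have key (w : E) : (∑ k, (Fin.cons 1 fun i => -c i : Fin (n + 1) → ℝ) k *
        inner ℝ ((Fin.cons x v : Fin (n + 1) → E) k) w) = inner ℝ z w := by
      rw [Fin.sum_univ_succ]
      simp only [Fin.cons_zero, Fin.cons_succ, one_mul, neg_mul, ← real_inner_smul_left,
        Finset.sum_neg_distrib, ← sum_inner]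
      rw [hc, inner_sub_left]
      ring
    ext j
    simp only [Finset.sum_apply, Pi.smul_apply, smul_eq_mul, hG, gram_apply]
    rw [key]
    refine Fin.cases ?_ (fun i => ?_) j
    · simp only [Fin.cons_zero]
      have : inner ℝ z (x - z) = 0 := Submodule.inner_left_of_mem_orthogonal hy hzV
      rw [inner_sub_right, real_inner_self_eq_norm_sq] at this
      linarith
    · simp only [Fin.cons_succ, Pi.zero_apply]
      exact Submodule.inner_left_of_mem_orthogonal (Submodule.subset_span (mem_range_self i)) hzV
  rw [hrow] at h1
  simp only [Fin.cons_zero, one_smul] at h1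
  rw [← h1, det_succ_row_zero, Fin.sum_univ_succ]
  have hsub : (G.updateRow 0 (Fin.cons (‖z‖ ^ 2) 0)).submatrix Fin.succ (Fin.succAbove 0) =
      gram ℝ v := by
    ext i j
    simp [hG, gram_apply]
  have hnorm : ‖Vᗮ.orthogonalProjectionOnto x‖ = ‖z‖ := rfl
  rw [hsub, hnorm]
  simp [mul_comm]

variable [FiniteDimensional ℝ E] [MeasurableSpace E] [BorelSpace E]

theorem map_orthogonalProjectionOnto_stdGaussian (V : Submodule ℝ E) :
    (stdGaussian E).map V.orthogonalProjectionOnto = stdGaussian V := by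
  have : IsProbabilityMeasure ((stdGaussian E).map V.orthogonalProjectionOnto) :=
    Measure.isProbabilityMeasure_map (by fun_prop)
  refine Measure.ext_of_charFun (funext fun t => ?_)
  rw [charFun_apply, integral_map (by fun_prop) (by fun_prop)]
  simp_rw [Submodule.inner_orthogonalProjectionOnto_eq_of_mem_right]
  rw [← charFun_apply, charFun_stdGaussian, charFun_stdGaussian, Submodule.coe_norm]

theorem exists_measurePreserving_norm_orthogonalProjectionOnto (V : Submodule ℝ E) {d : ℕ}
    (hd : finrank ℝ V = d) : ∃ L : E → EuclideanSpace ℝ (Fin d),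
      MeasurePreserving L (stdGaussian E) (stdGaussian _) ∧
        ∀ x, ‖V.orthogonalProjectionOnto x‖ = ‖L x‖ := by
  subst hd
  have h1 : MeasurePreserving V.orthogonalProjectionOnto (stdGaussian E) (stdGaussian V) :=
    ⟨by fun_prop, map_orthogonalProjectionOnto_stdGaussian V⟩
  have h2 : MeasurePreserving (stdOrthonormalBasis ℝ V).repr (stdGaussian V) (stdGaussian _) :=
    ⟨by fun_prop, stdGaussian_map _⟩
  exact ⟨_, h2.comp h1, fun x => by simp⟩

theorem ae_ne_zero_stdGaussian [Nontrivial E] : ∀ᵐ x ∂(stdGaussian E), x ≠ 0 := by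
  rw [stdGaussian_eq_withDensity]
  refine (withDensity_absolutelyContinuous _ _).ae_le ?_
  exact Measure.ae_ne volume 0

/-- The expected log-determinant of the Gram matrix of independent standard Gaussian vectors. -/
theorem log_det_gram_pi_stdGaussian {n : ℕ} (hn : n ≤ finrank ℝ E) :
    (∀ᵐ v ∂(Measure.pi fun _ : Fin n => stdGaussian E), 0 < (gram ℝ v).det) ∧
      Integrable (fun v => Real.log (gram ℝ v).det)
        (Measure.pi fun _ : Fin n => stdGaussian E) ∧
      ∫ v, Real.log (gram ℝ v).det ∂(Measure.pi fun _ : Fin n => stdGaussian E) =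
        ∑ j ∈ Finset.range n,
          (deriv (Real.log ∘ Real.Gamma) (((finrank ℝ E : ℝ) - j) / 2) + Real.log 2) := by
  induction n with
  | zero => simp
  | succ n ih =>
    obtain ⟨ihpos, ihInt, iheq⟩ := ih (by omega)
    set P := Measure.pi fun _ : Fin n => stdGaussian E with hP
    obtain ⟨d, hd⟩ : ∃ d, finrank ℝ E = n + (d + 1) := ⟨finrank ℝ E - n - 1, by omega⟩
    set F := EuclideanSpace ℝ (Fin (d + 1))
    obtain ⟨hFint, hFeq⟩ := log_norm_sq_stdGaussian F
    have hcont (m : ℕ) : Continuous fun v : Fin m → E => (gram ℝ v).det := by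
      refine Continuous.matrix_det (continuous_matrix fun i j => ?_)
      simp only [gram_apply]
      fun_prop
    have hmeas (m : ℕ) : Measurable fun v : Fin m → E => Real.log (gram ℝ v).det :=
      Real.measurable_log.comp (hcont m).measurable
    have hconsc : Continuous fun p : E × (Fin n → E) => (Fin.cons p.1 p.2 : Fin (n + 1) → E) := by
      fun_prop
    have hcons := hconsc.measurable
    have hmp : MeasurePreserving (fun p : E × (Fin n → E) => (Fin.cons p.1 p.2 : Fin (n + 1) → E))
        ((stdGaussian E).prod P) (Measure.pi fun _ : Fin (n + 1) => stdGaussian E) := by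
      have := (measurePreserving_piFinSuccAbove (fun _ : Fin (n + 1) => stdGaussian E) 0).symm
      rw [MeasurableEquiv.piFinSuccAbove_symm_apply] at this
      convert! this using 1
      ext p i
      simp
    have hemb : MeasurableEmbedding
        (fun p : E × (Fin n → E) => (Fin.cons p.1 p.2 : Fin (n + 1) → E)) := by
      have := (MeasurableEquiv.piFinSuccAbove (fun _ : Fin (n + 1) => E) 0).symm.measurableEmbedding
      rw [MeasurableEquiv.piFinSuccAbove_symm_apply] at this
      convert! this using 1
      ext p i
      simp
    have hslice : ∀ᵐ v ∂P, 0 < (gram ℝ v).det ∧ ∃ L : E → F,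
        MeasurePreserving L (stdGaussian E) (stdGaussian F) ∧
        ∀ x, (gram ℝ (Fin.cons x v : Fin (n + 1) → E)).det = (gram ℝ v).det * ‖L x‖ ^ 2 := by
      filter_upwards [ihpos] with v hv
      have hli := linearIndependent_of_det_gram_ne_zero hv.ne'
      have hfr := finrank_span_eq_card hli
      have hadd := (Submodule.span ℝ (range v)).finrank_add_finrank_orthogonal
      rw [Fintype.card_fin] at hfr
      obtain ⟨L, hL, hLx⟩ := exists_measurePreserving_norm_orthogonalProjectionOnto
        (Submodule.span ℝ (range v))ᗮ (d := d + 1) (by omega)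
      exact ⟨hv, L, hL, fun x => by rw [det_gram_cons, hLx]⟩
    have hslice_pos : ∀ᵐ v ∂P, ∀ᵐ x ∂(stdGaussian E),
        0 < (gram ℝ (Fin.cons x v : Fin (n + 1) → E)).det := by
      filter_upwards [hslice] with v ⟨hv, L, hL, hLx⟩
      filter_upwards [hL.quasiMeasurePreserving.ae ae_ne_zero_stdGaussian] with x hx
      rw [hLx]
      have := norm_pos_iff.2 hx
      positivity
    set g : E × (Fin n → E) → ℝ := fun p =>
      Real.log (gram ℝ (Fin.cons p.1 p.2 : Fin (n + 1) → E)).det - Real.log (gram ℝ p.2).det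
      with hg
    have hgmeas : Measurable g :=
      ((hmeas _).comp hcons).sub ((hmeas _).comp measurable_snd)
    have hgslice : ∀ᵐ v ∂P, ∃ L : E → F,
        MeasurePreserving L (stdGaussian E) (stdGaussian F) ∧
        (fun x => g (x, v)) =ᵐ[stdGaussian E] fun x => Real.log (‖L x‖ ^ 2) := by
      filter_upwards [hslice] with v ⟨hv, L, hL, hLx⟩
      refine ⟨L, hL, ?_⟩
      filter_upwards [hL.quasiMeasurePreserving.ae ae_ne_zero_stdGaussian] with x hx
      have hx' := norm_pos_iff.2 hx
      simp only [hg]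
      rw [hLx, Real.log_mul hv.ne' (by positivity)]
      ring
    have hlogm : Measurable fun y : F => Real.log (‖y‖ ^ 2) := by fun_prop
    have hgint : Integrable g ((stdGaussian E).prod P) := by
      rw [integrable_prod_iff' hgmeas.aestronglyMeasurable]
      constructor
      · filter_upwards [hgslice] with v ⟨L, hL, hLx⟩
        exact (hL.integrable_comp_of_integrable hFint).congr hLx.symm
      · refine (integrable_const (∫ y : F, ‖Real.log (‖y‖ ^ 2)‖ ∂(stdGaussian F))).congr ?_
        filter_upwards [hgslice] with v ⟨L, hL, hLx⟩
        rw [integral_congr_ae (hLx.mono fun x hx => congrArg norm hx), ← hL.map_eq,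
          integral_map hL.aemeasurable hlogm.norm.aestronglyMeasurable]
    have hgeq : ∫ p, g p ∂((stdGaussian E).prod P) =
        deriv (Real.log ∘ Real.Gamma) (((finrank ℝ E : ℝ) - n) / 2) + Real.log 2 := by
      rw [integral_prod_symm _ hgint]
      have : ∀ᵐ v ∂P, ∫ x, g (x, v) ∂(stdGaussian E) =
          deriv (Real.log ∘ Real.Gamma) (((finrank ℝ E : ℝ) - n) / 2) + Real.log 2 := by
        filter_upwards [hgslice] with v ⟨L, hL, hLx⟩
        rw [integral_congr_ae hLx, ← integral_map (φ := L) (f := fun y => Real.log (‖y‖ ^ 2))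
          hL.aemeasurable hlogm.aestronglyMeasurable, hL.map_eq, hFeq, hd, finrank_euclideanSpace,
          Fintype.card_fin]
        push_cast
        ring_nf
      rw [integral_congr_ae this]
      simp
    have hsnd : MeasurePreserving Prod.snd ((stdGaussian E).prod P) P := measurePreserving_snd
    have hDint : Integrable (fun p : E × (Fin n → E) => Real.log (gram ℝ p.2).det)
        ((stdGaussian E).prod P) := hsnd.integrable_comp_of_integrable ihInt
    have hsum : (fun p : E × (Fin n → E) =>
        Real.log (gram ℝ (Fin.cons p.1 p.2 : Fin (n + 1) → E)).det) =
        fun p => g p + Real.log (gram ℝ p.2).det := by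
      ext p
      simp [hg]
    refine ⟨?_, ?_, ?_⟩
    · rw [← hmp.map_eq, hemb.ae_map_iff]
      have hs : MeasurableSet {p : (Fin n → E) × E |
          0 < (gram ℝ (Fin.cons p.2 p.1 : Fin (n + 1) → E)).det} :=
        ((isOpen_lt continuous_const ((hcont _).comp hconsc)).preimage
          continuous_swap).measurableSet
      have h3 := (Measure.ae_ae_comm hs).1 hslice_pos
      exact (Measure.ae_prod_iff_ae_ae
        (isOpen_lt continuous_const ((hcont _).comp hconsc)).measurableSet).2 h3
    · rw [← hmp.integrable_comp_emb hemb]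
      simp only [Function.comp_def]
      rw [hsum]
      exact hgint.add hDint
    · rw [← hmp.integral_comp hemb, hsum, integral_add hgint hDint, hgeq,
        Finset.sum_range_succ, add_comm, ← iheq]
      congr 1
      rw [integral_fun_snd fun v : Fin n → E => Real.log (gram ℝ v).det]
      simp
end

theorem Matrix.IsHermitian.det_one_add_smul_eq_prod {ι : Type*} [Fintype ι] [DecidableEq ι]
    {A : Matrix ι ι ℝ} (hA : A.IsHermitian) {σ : ℝ} (hσ : σ ≠ 0) :
    (1 + σ • A).det = ∏ i, (1 + σ * hA.eigenvalues i) := by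
  have h := congrArg (Polynomial.eval (-σ⁻¹)) hA.charpoly_eq
  rw [eval_charpoly, Polynomial.eval_prod] at h
  have e : 1 + σ • A = (-σ) • (scalar ι (-σ⁻¹) - A) := by
    ext i j
    by_cases hij : i = j
    · subst hij
      simp [mul_sub, hσ]
    · simp [hij]
  rw [e, det_smul, h, ← Finset.card_univ, ← Finset.prod_const,
    ← Finset.prod_mul_distrib]
  refine Finset.prod_congr rfl fun i _ => ?_
  simp
  field_simp
  ring

theorem Matrix.PosSemidef.one_le_det_one_add {ι : Type*} [Fintype ι] [DecidableEq ι]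
    {A : Matrix ι ι ℝ} (hA : A.PosSemidef) : 1 ≤ (1 + A).det := by
  have h := hA.1.det_one_add_smul_eq_prod one_ne_zero
  rw [one_smul] at h
  rw [h]
  exact Finset.one_le_prod fun i _ => by simpa using hA.eigenvalues_nonneg i

theorem Matrix.PosSemidef.log_det_one_add_le_trace {ι : Type*} [Fintype ι] [DecidableEq ι]
    {A : Matrix ι ι ℝ} (hA : A.PosSemidef) : Real.log (1 + A).det ≤ A.trace := by
  have h := hA.1.det_one_add_smul_eq_prod one_ne_zero
  rw [one_smul] at h
  have hpos (i) : 0 < 1 + 1 * hA.1.eigenvalues i := by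
    have := hA.eigenvalues_nonneg i
    linarith
  rw [h, Real.log_prod fun i _ => (hpos i).ne', hA.1.trace_eq_sum_eigenvalues]
  refine Finset.sum_le_sum fun i _ => ?_
  have := Real.log_le_sub_one_of_pos (hpos i)
  simp at this ⊢
  linarith

open scoped MatrixOrder in
/-- The determinant is monotone for the Loewner order. -/
theorem Matrix.PosDef.det_le_det_add {ι : Type*} [Fintype ι] [DecidableEq ι]
    {P S : Matrix ι ι ℝ} (hP : P.PosDef) (hS : S.PosSemidef) : P.det ≤ (P + S).det := by
  obtain ⟨B, rfl⟩ := CStarAlgebra.nonneg_iff_eq_star_mul_self.1 hS.nonneg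
  rw [star_eq_conjTranspose]
  have hu : IsUnit P.det := hP.det_pos.ne'.isUnit
  have e : P + Bᴴ * B = P * (1 + (P⁻¹ * Bᴴ) * B) := by
    rw [Matrix.mul_add, Matrix.mul_one, ← Matrix.mul_assoc, ← Matrix.mul_assoc,
      mul_nonsing_inv _ hu, Matrix.one_mul]
  rw [e, det_mul, det_one_add_mul_comm, ← Matrix.mul_assoc]
  have := (hP.inv.posSemidef.mul_mul_conjTranspose_same B).one_le_det_one_add
  nlinarith [hP.det_pos]

/-- The tangent line inequality at `m` for the convex function `u ↦ log (1 + σ * exp u)`,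
evaluated at `u = log y`. -/
theorem Real.log_one_add_mul_exp_tangent {σ : ℝ} (hσ : 0 < σ) (m : ℝ) {y : ℝ} (hy : 0 < y) :
    Real.log (1 + σ * Real.exp m) +
      σ * Real.exp m / (1 + σ * Real.exp m) * (Real.log y - m) ≤ Real.log (1 + σ * y) := by
  set a := σ * Real.exp m with ha
  have ha0 : 0 < a := by positivity
  have h := Real.geom_mean_le_arith_mean2_weighted (w₁ := 1 / (1 + a)) (w₂ := a / (1 + a))
    (p₁ := 1) (p₂ := y / Real.exp m) (by positivity) (by positivity) zero_le_one (by positivity)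
    (by field_simp)
  rw [Real.one_rpow, one_mul] at h
  have hz : 0 < y / Real.exp m := by positivity
  have h2 := Real.log_le_log (Real.rpow_pos_of_pos hz _) h
  rw [Real.log_rpow hz, Real.log_div hy.ne' (Real.exp_pos m).ne', Real.log_exp] at h2
  have e : 1 / (1 + a) * 1 + a / (1 + a) * (y / Real.exp m) = (1 + σ * y) / (1 + a) := by
    have := (Real.exp_pos m).ne'
    rw [ha]
    field_simp
  rw [e, Real.log_div (by positivity) (by positivity)] at h2
  linarith

theorem Matrix.PosDef.log_det_one_add_smul_tangent {n : ℕ} {W : Matrix (Fin n) (Fin n) ℝ}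
    (hW : W.PosDef) {σ : ℝ} (hσ : 0 < σ) (m : ℝ) :
    n * Real.log (1 + σ * Real.exp m) +
      σ * Real.exp m / (1 + σ * Real.exp m) * (Real.log W.det - n * m) ≤
        Real.log (1 + σ • W).det := by
  have hpos (i) : 0 < hW.1.eigenvalues i := hW.eigenvalues_pos i
  have hpos' (i) : 0 < 1 + σ * hW.1.eigenvalues i := by have := hpos i; positivity
  rw [hW.1.det_one_add_smul_eq_prod hσ.ne', Real.log_prod fun i _ => (hpos' i).ne',
    hW.1.det_eq_prod_eigenvalues]
  simp only [RCLike.ofReal_real_eq_id, id]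
  rw [Real.log_prod fun i _ => (hpos i).ne']
  refine le_trans (le_of_eq ?_)
    (Finset.sum_le_sum fun i _ => Real.log_one_add_mul_exp_tangent hσ m (hpos i))
  rw [Finset.sum_add_distrib, ← Finset.mul_sum, Finset.sum_sub_distrib]
  simp

theorem Matrix.IsHermitian.posSemidef_sub_smul_one {q : ℕ} {R : Matrix (Fin q) (Fin q) ℝ}
    (hR : R.IsHermitian) {σ : ℝ} (heig : ∀ i, σ ≤ hR.eigenvalues i) :
    (R - σ • (1 : Matrix (Fin q) (Fin q) ℝ)).PosSemidef := by
  have e : R - σ • (1 : Matrix (Fin q) (Fin q) ℝ) =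
      (hR.eigenvectorUnitary : Matrix (Fin q) (Fin q) ℝ) *
        diagonal (fun i => hR.eigenvalues i - σ) *
        (hR.eigenvectorUnitary : Matrix (Fin q) (Fin q) ℝ)ᴴ := by
    have h := hR.spectral_theorem
    rw [Unitary.conjStarAlgAut_apply] at h
    have hd : diagonal (fun i => hR.eigenvalues i - σ) =
        diagonal (RCLike.ofReal ∘ hR.eigenvalues) - σ • (1 : Matrix (Fin q) (Fin q) ℝ) := by
      ext i j
      by_cases hij : i = j <;> simp [hij]
    have hu : (hR.eigenvectorUnitary : Matrix (Fin q) (Fin q) ℝ) *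
      (hR.eigenvectorUnitary : Matrix (Fin q) (Fin q) ℝ)ᴴ = 1 :=
      Unitary.mul_star_self_of_mem hR.eigenvectorUnitary.2
    rw [hd, Matrix.mul_sub, Matrix.sub_mul, Matrix.mul_smul, Matrix.mul_one, Matrix.smul_mul, hu]
    exact congrArg (· - σ • (1 : Matrix (Fin q) (Fin q) ℝ)) h
  rw [e]
  exact (PosSemidef.diagonal fun i => sub_nonneg.2 (heig i)).mul_mul_conjTranspose_same _

theorem integrable_trace_mul_mul_transpose {n q : ℕ} (R : Matrix (Fin q) (Fin q) ℝ) :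
    Integrable (fun X : Fin n → Fin q → ℝ => (of X * R * (of X)ᵀ).trace)
      (Measure.pi fun _ : Fin n => Measure.pi fun _ : Fin q => gaussianReal 0 1) := by
  have hL2 (i : Fin n) (k : Fin q) : MemLp (fun X : Fin n → Fin q → ℝ => X i k) 2
      (Measure.pi fun _ : Fin n => Measure.pi fun _ : Fin q => gaussianReal 0 1) := by
    have h1 := measurePreserving_eval (fun _ : Fin q => gaussianReal 0 1) k
    have h2 := measurePreserving_eval
      (fun _ : Fin n => Measure.pi fun _ : Fin q => gaussianReal 0 1) i
    exact (IsGaussian.memLp_two_id (μ := gaussianReal 0 1)).comp_measurePreserving (h1.comp h2)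
  simp only [trace, diag_apply, mul_apply, transpose_apply, of_apply, Finset.sum_mul]
  refine integrable_finsetSum _ fun i _ => integrable_finsetSum _ fun l _ =>
    integrable_finsetSum _ fun k _ => ?_
  refine (((hL2 i k).integrable_mul (hL2 i l)).const_mul (R k l)).congr (ae_of_all _ fun X => ?_)
  simp only [Pi.mul_apply]
  ring

theorem integrable_log_det_one_add_mul {n q : ℕ} {R : Matrix (Fin q) (Fin q) ℝ}
    (hR : R.PosSemidef) :
    Integrable (fun X : Fin n → Fin q → ℝ => Real.log (1 + of X * R * (of X)ᵀ).det)
      (Measure.pi fun _ : Fin n => Measure.pi fun _ : Fin q => gaussianReal 0 1) := by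
  refine (integrable_trace_mul_mul_transpose R).mono' ?_ (ae_of_all _ fun X => ?_)
  · refine (Real.measurable_log.comp (Continuous.measurable ?_)).aestronglyMeasurable
    have hX : Continuous fun X : Fin n → Fin q → ℝ => of X := continuous_id
    fun_prop
  · have hS : (of X * R * (of X)ᵀ).PosSemidef := by
      simpa using hR.mul_mul_conjTranspose_same (of X)
    rw [Real.norm_of_nonneg (Real.log_nonneg hS.one_le_det_one_add)]
    exact hS.log_det_one_add_le_trace

/-- The expected log-determinant of a real Wishart matrix. -/
theorem log_det_mul_transpose_gaussian {n q : ℕ} (hnq : n ≤ q) :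
    (∀ᵐ X ∂(Measure.pi fun _ : Fin n => Measure.pi fun _ : Fin q => gaussianReal 0 1),
        (of X * (of X)ᵀ).PosDef) ∧
      Integrable (fun X : Fin n → Fin q → ℝ => Real.log (of X * (of X)ᵀ).det)
        (Measure.pi fun _ : Fin n => Measure.pi fun _ : Fin q => gaussianReal 0 1) ∧
      ∫ X : Fin n → Fin q → ℝ, Real.log (of X * (of X)ᵀ).det
          ∂(Measure.pi fun _ : Fin n => Measure.pi fun _ : Fin q => gaussianReal 0 1) =
        ∑ j ∈ Finset.range n,
          (deriv (Real.log ∘ Real.Gamma) (((q : ℝ) - j) / 2) + Real.log 2) := by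
  have hrow : MeasurePreserving (WithLp.toLp 2 : (Fin q → ℝ) → EuclideanSpace ℝ (Fin q))
      (Measure.pi fun _ : Fin q => gaussianReal 0 1) (stdGaussian _) :=
    ⟨by fun_prop, map_pi_eq_stdGaussian⟩
  have hmp := measurePreserving_pi (fun _ : Fin n => Measure.pi fun _ : Fin q => gaussianReal 0 1)
    (fun _ : Fin n => stdGaussian (EuclideanSpace ℝ (Fin q))) fun _ => hrow
  have hgram (X : Fin n → Fin q → ℝ) :
      of X * (of X)ᵀ = gram ℝ fun i => (WithLp.toLp 2 (X i) : EuclideanSpace ℝ (Fin q)) := by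
    ext i j
    simp [gram_apply, mul_apply, PiLp.inner_apply, mul_comm]
  obtain ⟨hpos, hInt, heq⟩ := log_det_gram_pi_stdGaussian (E := EuclideanSpace ℝ (Fin q)) (n := n)
    (by simpa using hnq)
  simp_rw [hgram]
  refine ⟨?_, hmp.integrable_comp_of_integrable hInt, ?_⟩
  · filter_upwards [hmp.quasiMeasurePreserving.ae hpos] with X hX
    exact posDef_gram_of_linearIndependent (linearIndependent_of_det_gram_ne_zero hX.ne')
  · rw [← hmp.map_eq, integral_map hmp.aemeasurable
      (by rw [hmp.map_eq]; exact hInt.aestronglyMeasurable)] at heq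
    rw [heq, finrank_euclideanSpace, Fintype.card_fin]

/-- Lower bound on the expected log-determinant information rate: for `1 ≤ n ≤ q`,
`X` an `n × q` matrix of i.i.d. standard Gaussians and `R` a `q × q` real symmetric
positive semidefinite matrix all of whose eigenvalues are at least `σ > 0`,
`E_X log det (I_n + X R Xᵀ) ≥ n · log (1 + σ · exp((1/n) Σ_{j<n} (ψ((q-j)/2) + log 2)))`,
where `ψ = deriv (log ∘ Γ)` is the digamma function. -/
theorem expected_log_det_one_add_mul_ge {n q : ℕ} (hn : 1 ≤ n) (hnq : n ≤ q)
    (R : Matrix (Fin q) (Fin q) ℝ) (hR : R.PosSemidef) (σ : ℝ) (hσ : 0 < σ)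
    (heig : ∀ i, σ ≤ hR.1.eigenvalues i) :
    (n : ℝ) * Real.log (1 + σ * Real.exp ((1 / (n : ℝ)) *
        ∑ j ∈ Finset.range n,
          (deriv (Real.log ∘ Real.Gamma) (((q : ℝ) - j) / 2) + Real.log 2))) ≤
      ∫ X : Fin n → Fin q → ℝ,
          Real.log (1 + Matrix.of X * R * (Matrix.of X)ᵀ).det
        ∂(Measure.pi fun _ : Fin n => Measure.pi fun _ : Fin q => gaussianReal 0 1) := by
  obtain ⟨hpos, hInt, heq⟩ := log_det_mul_transpose_gaussian hnq
  have hn0 : (n : ℝ) ≠ 0 := by positivity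
  rw [← heq]
  set P := Measure.pi fun _ : Fin n => Measure.pi fun _ : Fin q => gaussianReal 0 1
  set I := ∫ X : Fin n → Fin q → ℝ, Real.log (of X * (of X)ᵀ).det ∂P with hI
  set m := 1 / (n : ℝ) * I with hm
  set s := σ * Real.exp m / (1 + σ * Real.exp m)
  have hnm : n * m = I := by rw [hm]; field_simp
  have hlhs : ∫ X : Fin n → Fin q → ℝ, (n * Real.log (1 + σ * Real.exp m) +
      s * (Real.log (of X * (of X)ᵀ).det - n * m)) ∂P = n * Real.log (1 + σ * Real.exp m) := by
    have hsub : Integrable (fun X : Fin n → Fin q → ℝ =>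
        s * (Real.log (of X * (of X)ᵀ).det - n * m)) P :=
      (hInt.sub (integrable_const _)).const_mul _
    rw [integral_add (integrable_const _) hsub,
      integral_const_mul s, integral_sub hInt (integrable_const _), ← hI]
    simp [hnm]
  rw [← hlhs]
  refine integral_mono_ae
    ((integrable_const _).add ((hInt.sub (integrable_const _)).const_mul _))
    (integrable_log_det_one_add_mul hR) ?_
  filter_upwards [hpos] with X hX
  refine (hX.log_det_one_add_smul_tangent hσ m).trans ?_
  have hP : (1 + σ • (of X * (of X)ᵀ)).PosDef := PosDef.one.add (hX.smul hσ)
  refine Real.log_le_log hP.det_pos ?_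
  have hS : (of X * (R - σ • 1) * (of X)ᵀ).PosSemidef := by
    simpa using (hR.1.posSemidef_sub_smul_one heig).mul_mul_conjTranspose_same (of X)
  convert! hP.det_le_det_add hS using 2
  rw [Matrix.mul_sub, Matrix.sub_mul, Matrix.mul_smul, Matrix.mul_one, Matrix.smul_mul]
  abel
end

section
/- Let n ≤ q be positive integers and let μ be the probability measure on n×q real matrices under which all entries are i.i.d. standard Gaussian N(0,1). Then for μ-almost every X, the matrix X has rank n; equivalently, det(X Xᵀ) ≠ 0 for μ-almost every X. -/
open MeasureTheory ProbabilityTheory Matrix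

/-- A finite product of absolutely continuous measures is absolutely continuous. -/
theorem pi_absolutelyContinuous_of_forall {α : Type*} [MeasurableSpace α] {k : ℕ}
    {μ ν : Fin k → Measure α} [∀ i, SigmaFinite (μ i)] [∀ i, SigmaFinite (ν i)]
    (h : ∀ i, μ i ≪ ν i) : Measure.pi μ ≪ Measure.pi ν := by
  induction k with
  | zero => rw [Subsingleton.elim μ ν]
  | succ k ih =>
    have hμ := (measurePreserving_piFinSuccAbove μ 0).symm
    have hν := (measurePreserving_piFinSuccAbove ν 0).symm
    rw [← hμ.map_eq, ← hν.map_eq]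
    exact ((h 0).prod (ih fun i => h _)).map hμ.measurable

/-- A proper subspace of `ℝ^q` is null for the standard Gaussian measure. -/
theorem pi_gaussianReal_submodule {q : ℕ} (W : Submodule ℝ (Fin q → ℝ)) (hW : W ≠ ⊤) :
    Measure.pi (fun _ : Fin q => gaussianReal 0 1) W = 0 :=
  pi_absolutelyContinuous_of_forall
    (fun _ => gaussianReal_absolutelyContinuous 0 one_ne_zero)
    (Measure.addHaar_submodule volume W hW)

/-- If every proper subspace is null, then `k ≤ dim E` independent samples are almost surely
linearly independent. -/
theorem ae_linearIndependent_pi {E : Type*} [NormedAddCommGroup E] [NormedSpace ℝ E]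
    [FiniteDimensional ℝ E] [MeasurableSpace E] [BorelSpace E] (ν : Measure E) [SigmaFinite ν]
    (hν : ∀ W : Submodule ℝ E, W ≠ ⊤ → ν W = 0) {k : ℕ} (hk : k ≤ Module.finrank ℝ E) :
    ∀ᵐ X : Fin k → E ∂(Measure.pi fun _ => ν), LinearIndependent ℝ X := by
  have : ProperSpace E := FiniteDimensional.proper ℝ E
  induction k with
  | zero => exact .of_forall fun X => linearIndependent_empty_type
  | succ k ih =>
    have hmp := (measurePreserving_piFinSuccAbove (fun _ : Fin (k + 1) => ν) 0).symm
    have hmeas : MeasurableSet {X : Fin (k + 1) → E | LinearIndependent ℝ X} :=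
      isOpen_setOfPred_linearIndependent.measurableSet
    rw [← hmp.map_eq, ae_map_iff hmp.measurable.aemeasurable hmeas]
    have hcons (z : E × (Fin k → E)) :
        (MeasurableEquiv.piFinSuccAbove (fun _ : Fin (k + 1) => E) 0).symm z =
          Fin.cons z.1 z.2 :=
      Fin.insertNth_zero' z.1 z.2
    have hmeas' := hmp.measurable hmeas
    simp only [Set.preimage_ofPred_eq, hcons] at hmeas' ⊢
    rw [Measure.ae_prod_iff_ae_ae hmeas', Measure.ae_ae_comm hmeas']
    filter_upwards [ih (by omega)] with X hX
    have hspan : Submodule.span ℝ (Set.range X) ≠ ⊤ := fun htop => by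
      have := finrank_span_eq_card hX
      rw [htop, finrank_top, Fintype.card_fin] at this
      omega
    filter_upwards [measure_eq_zero_iff_ae_notMem.1 (hν _ hspan)] with x hx
    exact linearIndependent_finCons.2 ⟨hX, hx⟩

/-- An `n × q` matrix of i.i.d. standard Gaussians with `1 ≤ n ≤ q` almost surely
has full rank `n`; equivalently `det (X Xᵀ) ≠ 0` almost surely. -/
theorem gaussian_matrix_ae_full_rank {n q : ℕ} (hn : 1 ≤ n) (hnq : n ≤ q) :
    ∀ᵐ X : Fin n → Fin q → ℝ
      ∂(Measure.pi fun _ : Fin n => Measure.pi fun _ : Fin q => gaussianReal 0 1),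
      (Matrix.of X).rank = n ∧ (Matrix.of X * (Matrix.of X)ᵀ).det ≠ 0 := by
  filter_upwards [ae_linearIndependent_pi _ pi_gaussianReal_submodule
    (by simpa using hnq : n ≤ Module.finrank ℝ (Fin q → ℝ))] with X hX
  have hrank : (Matrix.of X).rank = n := by
    simpa using LinearIndependent.rank_matrix (M := Matrix.of X) hX
  refine ⟨hrank, fun hdet => ?_⟩
  have hgram := rank_self_mul_transpose (Matrix.of X)
  obtain ⟨v, hv, hmul⟩ := exists_vecMul_eq_zero_iff.2 hdet
  have hrows : LinearIndependent ℝ (Matrix.of X * (Matrix.of X)ᵀ).row := by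
    rw [linearIndependent_iff_card_eq_finrank_span, Set.finrank,
      ← Matrix.rank_eq_finrank_span_row, hgram, hrank,
      Fintype.card_fin]
  exact hv (Matrix.vecMul_injective_iff.2 hrows (by simpa using hmul))
end

section
/- Let n ≤ q be positive integers, let μ be the probability measure on n×q real matrices under which all entries are i.i.d. standard Gaussian N(0,1), and for each j ∈ {0,…,n−1} let χ²_{q−j} denote the chi-squared distribution with q−j degrees of freedom, i.e., the Gamma distribution with shape (q−j)/2 and rate 1/2. Then the pushforward of μ under the map X ↦ det(X Xᵀ) equals the pushforward of the product measure ⊗_{j=0}^{n−1} χ²_{q−j} under the map y ↦ ∏_{j=0}^{n−1} y_j. -/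
open MeasureTheory ProbabilityTheory Matrix

theorem integral_gammaMeasure {a r : ℝ} (ha : 0 < a) (hr : 0 < r) (f : ℝ → ℝ) :
    ∫ x, f x ∂gammaMeasure a r =
      ∫ x in Set.Ioi 0, r ^ a / Real.Gamma a * (x ^ (a - 1) * Real.exp (-(r * x)) * f x) := by
  rw [gammaMeasure, integral_withDensity_eq_integral_toReal_smul (f := gammaPDF a r)
    (measurable_gammaPDFReal a r).ennreal_ofReal
      (ae_of_all _ fun _ ↦ ENNReal.ofReal_lt_top), ← integral_Ici_eq_integral_Ioi,
      ← integral_indicator measurableSet_Ici]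
  congr 1 with x
  rw [gammaPDF, ENNReal.toReal_ofReal (gammaPDFReal_nonneg ha hr x), smul_eq_mul, gammaPDFReal]
  simp only [Set.indicator, Set.mem_Ici]
  split_ifs <;> ring

theorem mgf_id_gammaMeasure {a r : ℝ} (ha : 0 < a) (hr : 0 < r) {t : ℝ} (ht : t < r) :
    mgf id (gammaMeasure a r) t = (r / (r - t)) ^ a := by
  have hrt : 0 < r - t := sub_pos.2 ht
  have hΓ := (Real.Gamma_pos_of_pos ha).ne'
  have h (x : ℝ) : x ^ (a - 1) * Real.exp (-(r * x)) * Real.exp (t * x) =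
      x ^ (a - 1) * Real.exp (-((r - t) * x)) := by
    rw [mul_assoc, ← Real.exp_add]; ring_nf
  rw [mgf, integral_gammaMeasure ha hr, integral_const_mul]
  simp_rw [id, h]
  rw [Real.integral_rpow_mul_exp_neg_mul_Ioi ha hrt, div_eq_mul_one_div r,
    Real.mul_rpow hr.le (by positivity)]
  field_simp

theorem mgf_id_gammaMeasure_of_le {a r : ℝ} (ha : 0 < a) (hr : 0 < r) {t : ℝ} (ht : r ≤ t) :
    mgf id (gammaMeasure a r) t = 0 := by
  rw [mgf, integral_gammaMeasure ha hr, integral_const_mul, integral_undef, mul_zero]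
  intro h
  refine not_integrableOn_Ioi_rpow (a - 1) (h.mono' (by fun_prop) ?_)
  refine (ae_restrict_iff' measurableSet_Ioi).2 (ae_of_all _ fun x (hx : 0 < x) ↦ ?_)
  rw [Real.norm_of_nonneg (by positivity), mul_assoc, ← Real.exp_add]
  refine le_mul_of_one_le_right (by positivity) (Real.one_le_exp ?_)
  have := mul_le_mul_of_nonneg_right ht hx.le
  simp only [id]; linarith

theorem mgf_sum_sq_gaussianReal (d : ℕ) (t : ℝ) :
    mgf (fun x : Fin d → ℝ ↦ ∑ i, x i ^ 2) (Measure.pi fun _ ↦ gaussianReal 0 1) t =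
      √((1 / 2) / (1 / 2 - t)) ^ d := by
  have h (x : ℝ) : gaussianPDFReal 0 1 x * Real.exp (t * x ^ 2) =
      (√(2 * Real.pi))⁻¹ * Real.exp (-(1 / 2 - t) * x ^ 2) := by
    simp only [gaussianPDFReal, NNReal.coe_one, mul_one, sub_zero, mul_assoc, ← Real.exp_add]
    ring_nf
  simp_rw [mgf, Finset.mul_sum, Real.exp_sum]
  rw [integral_fintype_prod_eq_pow (fun x ↦ Real.exp (t * x ^ 2)), Fintype.card_fin,
    integral_gaussianReal_eq_integral_smul one_ne_zero]
  simp_rw [smul_eq_mul, h]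
  rw [integral_const_mul, integral_gaussian, ← Real.sqrt_inv, ← Real.sqrt_mul (by positivity)]
  congr 2
  field_simp

theorem map_sum_sq_gaussianReal {d : ℕ} (hd : 0 < d) :
    (Measure.pi fun _ : Fin d ↦ gaussianReal 0 1).map (fun x ↦ ∑ i, x i ^ 2) =
      gammaMeasure (d / 2) (1 / 2) := by
  have ha : (0 : ℝ) < d / 2 := by positivity
  have hr : (0 : ℝ) < 1 / 2 := by norm_num
  have := isProbabilityMeasure_gammaMeasure ha hr
  have hm : Measurable (fun x : Fin d → ℝ ↦ ∑ i, x i ^ 2) := by fun_prop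
  have := Measure.isProbabilityMeasure_map
    (μ := Measure.pi fun _ : Fin d ↦ gaussianReal 0 1) hm.aemeasurable
  have hmgf : mgf id (gammaMeasure (d / 2) (1 / 2)) = mgf id
      ((Measure.pi fun _ : Fin d ↦ gaussianReal 0 1).map (fun x ↦ ∑ i, x i ^ 2)) := by
    ext t
    rw [mgf_id_map hm.aemeasurable, mgf_sum_sq_gaussianReal]
    rcases lt_or_ge t (1 / 2) with ht | ht
    · have : (0 : ℝ) < 1 / 2 - t := sub_pos.2 ht
      rw [mgf_id_gammaMeasure ha hr ht, Real.sqrt_eq_rpow, ← Real.rpow_mul_natCast (by positivity)]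
      ring_nf
    · rw [mgf_id_gammaMeasure_of_le ha hr ht, Real.sqrt_eq_zero_of_nonpos
        (div_nonpos_of_nonneg_of_nonpos hr.le (sub_nonpos.2 ht)), zero_pow hd.ne']
  have h0 : (0 : ℝ) ∈ interior (integrableExpSet id (gammaMeasure (d / 2) (1 / 2))) := by
    refine mem_interior.2 ⟨Set.Iio (1 / 2), fun t (ht : t < 1 / 2) ↦ ?_, isOpen_Iio, hr⟩
    refine mgf_pos_iff.1 ?_
    rw [mgf_id_gammaMeasure ha hr ht]
    have : (0 : ℝ) < 1 / 2 - t := sub_pos.2 ht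
    positivity
  refine (Measure.ext_of_charFun ?_).symm
  ext t
  rw [← complexMGF_id_mul_I, ← complexMGF_id_mul_I]
  exact eqOn_complexMGF_of_mgf hmgf (by simpa using h0)

theorem map_norm_sq_stdGaussian {E : Type*} [NormedAddCommGroup E] [InnerProductSpace ℝ E]
    [FiniteDimensional ℝ E] [MeasurableSpace E] [BorelSpace E] (hE : 0 < Module.finrank ℝ E) :
    (stdGaussian E).map (fun x ↦ ‖x‖ ^ 2) = gammaMeasure (Module.finrank ℝ E / 2) (1 / 2) := by
  rw [stdGaussian, Measure.map_map (by fun_prop) (by fun_prop), ← map_sum_sq_gaussianReal hE]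
  congr 1 with x
  rw [Function.comp_apply, ← (stdOrthonormalBasis ℝ E).sum_sq_norm_inner_right]
  simp [inner_sum, real_inner_smul_right,
    orthonormal_iff_ite.1 (stdOrthonormalBasis ℝ E).orthonormal]

theorem map_orthogonalProjection_stdGaussian {E : Type*} [NormedAddCommGroup E]
    [InnerProductSpace ℝ E] [FiniteDimensional ℝ E] [MeasurableSpace E] [BorelSpace E]
    (U : Submodule ℝ E) :
    (stdGaussian E).map U.orthogonalProjectionOnto = stdGaussian U := by
  refine Measure.ext_of_charFun ?_
  ext t
  rw [charFun_apply, integral_map (by fun_prop) (by fun_prop)]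
  simp_rw [Submodule.inner_orthogonalProjectionOnto_eq_of_mem_right]
  rw [← charFun_apply, charFun_stdGaussian, charFun_stdGaussian, Submodule.coe_norm]

theorem det_fromRows_mul_transpose {m k : Type*} [Fintype m] [DecidableEq m] [Fintype k]
    (A : Matrix m k ℝ) (x w : k → ℝ) (c : m → ℝ)
    (hx : x = w + c ᵥ* A) (hw : A *ᵥ w = 0) :
    (fromRows A (replicateRow (Fin 1) x) * (fromRows A (replicateRow (Fin 1) x))ᵀ).det =
      (A * Aᵀ).det * (w ⬝ᵥ w) := by
  have hL : fromRows A (replicateRow (Fin 1) x) =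
      fromBlocks (1 : Matrix m m ℝ) 0 (replicateRow (Fin 1) c) (1 : Matrix (Fin 1) (Fin 1) ℝ) * fromRows A (replicateRow (Fin 1) w) := by
    rw [fromBlocks_mul_fromRows, hx]
    simp [replicateRow_vecMul, add_comm]
  have hz : A * (replicateRow (Fin 1) w)ᵀ = 0 := by
    ext i j
    simpa [mul_apply, mulVec, dotProduct] using congrFun hw i
  rw [hL, transpose_mul, Matrix.mul_assoc, ← Matrix.mul_assoc (fromRows _ _), det_mul, det_mul,
    det_transpose, det_fromBlocks_zero₁₂, transpose_fromRows, fromRows_mul_fromCols, hz,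
    det_fromBlocks_zero₁₂]
  simp [mul_apply, dotProduct]

/-- The span of the rows of a matrix, in Euclidean space. -/
def rowSpan {n q : ℕ} (X : Fin n → Fin q → ℝ) : Submodule ℝ (EuclideanSpace ℝ (Fin q)) :=
  Submodule.span ℝ (Set.range fun i ↦ WithLp.toLp 2 (X i))

theorem finrank_rowSpan_orthogonal {n q : ℕ} {X : Fin n → Fin q → ℝ}
    (hX : (of X * (of X)ᵀ).det ≠ 0) : Module.finrank ℝ (rowSpan X)ᗮ = q - n := by
  have h : LinearIndependent ℝ (fun i ↦ WithLp.toLp 2 (X i)) := by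
    have : LinearIndependent ℝ X := by
      rw [← show (of X).row = X from rfl, ← vecMul_injective_iff]
      intro c d hcd
      have hu := (Matrix.isUnit_iff_isUnit_det _).2 hX.isUnit
      refine vecMul_injective_of_isUnit hu ?_
      simp only [← vecMul_vecMul]
      exact congrArg (· ᵥ* (of X)ᵀ) hcd
    exact this.map' (WithLp.linearEquiv 2 ℝ (Fin q → ℝ)).symm.toLinearMap (LinearEquiv.ker _)
  have := (rowSpan X).finrank_add_finrank_orthogonal
  rw [rowSpan, finrank_span_eq_card h, finrank_euclideanSpace, Fintype.card_fin,
    Fintype.card_fin] at this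
  rw [rowSpan]; omega

theorem det_snoc_mul_transpose {n q : ℕ} (X : Fin n → Fin q → ℝ) (x : Fin q → ℝ) :
    (of (Fin.snoc X x : Fin (n + 1) → Fin q → ℝ) *
        (of (Fin.snoc X x : Fin (n + 1) → Fin q → ℝ))ᵀ).det =
      (of X * (of X)ᵀ).det *
        ‖(rowSpan X)ᗮ.orthogonalProjectionOnto (WithLp.toLp 2 x)‖ ^ 2 := by
  set w := (rowSpan X)ᗮ.orthogonalProjectionOnto (WithLp.toLp 2 x) with hw
  obtain ⟨c, hc⟩ := (Submodule.mem_span_range_iff_exists_fun ℝ).1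
    ((rowSpan X).orthogonalProjectionOnto (WithLp.toLp 2 x)).2
  have hx : x = WithLp.ofLp (w : EuclideanSpace ℝ (Fin q)) + c ᵥ* of X := by
    have := (rowSpan X).starProjection_add_starProjection_orthogonal (WithLp.toLp 2 x)
    rw [Submodule.starProjection_apply, Submodule.starProjection_apply, ← hc, ← hw] at this
    ext j
    have := congrArg (fun v : EuclideanSpace ℝ (Fin q) ↦ v j) this
    simp only [PiLp.add_apply, WithLp.ofLp_sum, WithLp.ofLp_smul, Finset.sum_apply,
      Pi.smul_apply, smul_eq_mul] at this
    simp [← this, vecMul, dotProduct, add_comm]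
  have hXw : of X *ᵥ WithLp.ofLp (w : EuclideanSpace ℝ (Fin q)) = 0 := by
    ext i
    have := (Submodule.mem_orthogonal _ _).1 w.2 (WithLp.toLp 2 (X i))
      (Submodule.subset_span ⟨i, rfl⟩)
    simpa [PiLp.inner_apply, mulVec, dotProduct, mul_comm] using this
  have hsub : (of (Fin.snoc X x : Fin (n + 1) → Fin q → ℝ)).submatrix finSumFinEquiv id =
      fromRows (of X) (replicateRow (Fin 1) x) := by
    ext i j
    rcases i with i | i
    · exact congrFun (Fin.snoc_castSucc (α := fun _ ↦ Fin q → ℝ) x X i) j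
    · have : i = 0 := Subsingleton.elim _ _
      subst this
      exact congrFun (Fin.snoc_last (α := fun _ ↦ Fin q → ℝ) x X) j
  rw [← det_submatrix_equiv_self finSumFinEquiv, submatrix_mul _ _ _ id _ Function.bijective_id,
    ← transpose_submatrix, hsub, det_fromRows_mul_transpose _ _ _ _ hx hXw, Submodule.coe_norm,
    EuclideanSpace.real_norm_sq_eq]
  simp [dotProduct, sq]

theorem map_det_snoc {n q : ℕ} (hnq : n < q) (X : Fin n → Fin q → ℝ) :
    (Measure.pi fun _ : Fin q ↦ gaussianReal 0 1).map (fun x ↦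
      (of (Fin.snoc X x : Fin (n + 1) → Fin q → ℝ) *
        (of (Fin.snoc X x : Fin (n + 1) → Fin q → ℝ))ᵀ).det) =
      (gammaMeasure (((q : ℝ) - n) / 2) (1 / 2)).map (fun y ↦ (of X * (of X)ᵀ).det * y) := by
  simp_rw [det_snoc_mul_transpose]
  have hq : (0 : ℝ) < ((q : ℝ) - n) / 2 := by
    have : (n : ℝ) < q := by exact_mod_cast hnq
    linarith
  have := isProbabilityMeasure_gammaMeasure hq (one_half_pos (α := ℝ))
  by_cases hX : (of X * (of X)ᵀ).det = 0
  · simp only [hX, zero_mul, Measure.map_const, measure_univ]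
  have hr := finrank_rowSpan_orthogonal hX
  have h := map_norm_sq_stdGaussian (E := (rowSpan X)ᗮ) (by omega)
  rw [hr, Nat.cast_sub hnq.le, ← map_orthogonalProjection_stdGaussian, ← map_pi_eq_stdGaussian,
    Measure.map_map (by fun_prop) (by fun_prop), Measure.map_map (by fun_prop) (by fun_prop)] at h
  rw [← h, Measure.map_map (by fun_prop) (by fun_prop)]
  rfl

theorem lintegral_pi_snoc {α : Type*} [MeasurableSpace α] {n : ℕ} (μ : Fin (n + 1) → Measure α)
    [∀ i, SigmaFinite (μ i)] {F : (Fin (n + 1) → α) → ENNReal} (hF : Measurable F) :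
    ∫⁻ X, F X ∂Measure.pi μ =
      ∫⁻ Y, ∫⁻ x, F (Fin.snoc Y x) ∂μ (Fin.last n) ∂Measure.pi fun i ↦ μ (Fin.castSucc i) := by
  have h := (measurePreserving_piFinSuccAbove μ (Fin.last n)).symm
  have hm : Measurable fun a ↦
      F ((MeasurableEquiv.piFinSuccAbove (fun _ ↦ α) (Fin.last n)).symm a) := hF.comp h.measurable
  rw [← h.lintegral_comp hF, lintegral_prod_symm _ hm.aemeasurable]
  simp [MeasurableEquiv.piFinSuccAbove, Fin.snocEquiv]

/-- Bartlett-type decomposition of the Wishart determinant: for `1 ≤ n ≤ q` and `X`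
an `n × q` matrix of i.i.d. standard Gaussians, the law of `det (X Xᵀ)` equals the
law of the product `∏_{j<n} y j` where the `y j` are independent chi-squared random
variables with `q − j` degrees of freedom (Gamma with shape `(q-j)/2`, rate `1/2`). -/
theorem wishart_det_eq_prod_chiSq {n q : ℕ} (hn : 1 ≤ n) (hnq : n ≤ q) :
    Measure.map (fun X : Fin n → Fin q → ℝ => (Matrix.of X * (Matrix.of X)ᵀ).det)
        (Measure.pi fun _ : Fin n => Measure.pi fun _ : Fin q => gaussianReal 0 1) =
      Measure.map (fun y : Fin n → ℝ => ∏ j, y j)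
        (Measure.pi fun j : Fin n => gammaMeasure (((q : ℝ) - (j : ℕ)) / 2) (1 / 2)) := by
  have hdet (m : ℕ) : Measurable fun X : Fin m → Fin q → ℝ ↦ (of X * (of X)ᵀ).det := by
    refine Continuous.measurable ?_
    exact (continuous_id.matrix_mul continuous_id.matrix_transpose).matrix_det
  have hprob (j : ℕ) (hj : j < q) :
      IsProbabilityMeasure (gammaMeasure (((q : ℝ) - j) / 2) (1 / 2)) := by
    have : (j : ℝ) < q := by exact_mod_cast hj
    exact isProbabilityMeasure_gammaMeasure (by linarith) one_half_pos
  clear hn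
  induction n with
  | zero => simp
  | succ n ih =>
    have hγ (j : Fin (n + 1)) : IsProbabilityMeasure
        (gammaMeasure (((q : ℝ) - (j : ℕ)) / 2) (1 / 2)) := hprob j (by omega)
    have hγn := hprob n (by omega)
    refine Measure.ext_of_lintegral _ fun f hf ↦ ?_
    have hsnoc (X : Fin n → Fin q → ℝ) :
        Measurable fun x ↦ (Fin.snoc X x : Fin (n + 1) → Fin q → ℝ) := by
      fun_prop
    have hinner (X : Fin n → Fin q → ℝ) :
        ∫⁻ x, f (of (Fin.snoc X x : Fin (n + 1) → Fin q → ℝ) *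
            (of (Fin.snoc X x : Fin (n + 1) → Fin q → ℝ))ᵀ).det
              ∂Measure.pi (fun _ ↦ gaussianReal 0 1) =
          ∫⁻ y, f ((of X * (of X)ᵀ).det * y) ∂gammaMeasure (((q : ℝ) - n) / 2) (1 / 2) := by
      rw [← lintegral_map hf (measurable_const_mul _), ← map_det_snoc hnq]
      exact (lintegral_map hf ((hdet _).comp (hsnoc X))).symm
    have hfdet : Measurable fun X : Fin (n + 1) → Fin q → ℝ ↦ f (of X * (of X)ᵀ).det :=
      hf.comp (hdet _)
    have hg : Measurable fun t : ℝ ↦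
        ∫⁻ y, f (t * y) ∂gammaMeasure (((q : ℝ) - n) / 2) (1 / 2) :=
      Measurable.lintegral_prod_right' (f := fun p : ℝ × ℝ ↦ f (p.1 * p.2)) (by fun_prop)
    rw [lintegral_map hf (hdet _), lintegral_map hf (by fun_prop),
      lintegral_pi_snoc _ hfdet, lintegral_pi_snoc _ (by fun_prop)]
    simp only [Fin.prod_snoc, Fin.val_last, Fin.val_castSucc, hinner]
    rw [← lintegral_map hg (hdet _), ih (by omega), lintegral_map hg (by fun_prop)]
end

section
/- Let r : ℤ → ℝ satisfy r(−τ) = r(τ) for all τ and r(τ) = 0 for all |τ| ≥ N (some N), define its symbol S(ω) = Σ_{τ ∈ ℤ} r(τ) · cos(τω), and assume S(ω) > 0 for all ω ∈ [0, 2π]. For any n ≥ 1 let T_n(r) be the n×n real Toeplitz matrix with entries (T_n(r))_{ij} = r(i − j). Then det T_n(r) ≥ exp( (n / (2π)) · ∫_0^{2π} log S(ω) dω ). -/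
open Matrix

open MeasureTheory Polynomial intervalIntegral

/-- Jensen's inequality for the exponential, with a weight given by the squared modulus of a monic
polynomial, whose Mahler measure is at least one. -/
theorem exp_average_log_le_average_norm_sq_mul {p : ℂ[X]} (hp : p.Monic) {S : ℝ → ℝ}
    (hS : Continuous S) (hpos : ∀ ω ∈ Set.Icc (0 : ℝ) (2 * Real.pi), 0 < S ω) :
    Real.exp ((2 * Real.pi)⁻¹ * ∫ ω in (0 : ℝ)..(2 * Real.pi), Real.log (S ω)) ≤
      (2 * Real.pi)⁻¹ *
        ∫ ω in (0 : ℝ)..(2 * Real.pi), ‖p.eval (circleMap 0 1 ω)‖ ^ 2 * S ω := by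
  have hπ : (0 : ℝ) < 2 * Real.pi := Real.two_pi_pos
  have hcont : Continuous fun ω : ℝ ↦ ‖p.eval (circleMap 0 1 ω)‖ ^ 2 * S ω := by
    have : Continuous fun ω : ℝ ↦ p.eval (circleMap 0 1 ω) :=
      p.continuous.comp (continuous_circleMap 0 1)
    fun_prop
  have hzero : volume {ω : ℝ | p.eval (circleMap 0 1 ω) = 0} = 0 := by
    have hfin : {z : ℂ | p.eval z = 0}.Finite := by
      simpa [IsRoot] using Polynomial.finite_setOfPred_isRoot hp.ne_zero
    exact (hfin.countable.preimage_circleMap 0 one_ne_zero).measure_zero volume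
  have hne : ∀ᵐ ω : ℝ, p.eval (circleMap 0 1 ω) ≠ 0 := by
    rw [ae_iff]; simpa using hzero
  set c : ℝ := (2 * Real.pi)⁻¹ *
    ∫ ω in (0 : ℝ)..(2 * Real.pi), ‖p.eval (circleMap 0 1 ω)‖ ^ 2 * S ω with hc
  have hcpos : 0 < c := by
    refine mul_pos (inv_pos.2 hπ) ?_
    rw [integral_pos_iff_support_of_nonneg_ae' ?_ (hcont.intervalIntegrable _ _)]
    · refine ⟨hπ, ?_⟩
      have hsub : Set.Ioc 0 (2 * Real.pi) \ {ω : ℝ | p.eval (circleMap 0 1 ω) = 0} ⊆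
          (Function.support fun ω : ℝ ↦ ‖p.eval (circleMap 0 1 ω)‖ ^ 2 * S ω) ∩
            Set.Ioc 0 (2 * Real.pi) := by
        rintro ω ⟨hω, hω0⟩
        refine ⟨?_, hω⟩
        have := (hpos ω ⟨hω.1.le, hω.2⟩).ne'
        simp only [Set.mem_ofPred_eq] at hω0
        simp [hω0, this]
      refine lt_of_lt_of_le ?_ (measure_mono hsub)
      rw [measure_sdiff_null hzero]
      simpa using Real.pi_pos
    · rw [Set.uIoc_of_le hπ.le]
      filter_upwards [ae_restrict_mem measurableSet_Ioc] with ω hω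
      have := hpos ω ⟨hω.1.le, hω.2⟩
      simp only [Pi.zero_apply]
      positivity
  have hlogS : IntervalIntegrable (fun ω ↦ Real.log (S ω)) volume 0 (2 * Real.pi) := by
    refine ContinuousOn.intervalIntegrable ?_
    rw [Set.uIcc_of_le hπ.le]
    exact hS.continuousOn.log fun ω hω ↦ (hpos ω hω).ne'
  have hlogp := p.intervalIntegrable_mahlerMeasure
  have hmahler :
      0 ≤ ∫ ω in (0 : ℝ)..(2 * Real.pi), Real.log ‖p.eval (circleMap 0 1 ω)‖ := by
    have h := one_le_mahlerMeasure_of_one_le_norm_leadingCoeff (p := p) (by simp [hp])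
    rw [mahlerMeasure_def_of_ne_zero hp.ne_zero, Real.one_le_exp_iff] at h
    exact nonneg_of_mul_nonneg_right h (inv_pos.2 hπ)
  have hle : ∫ ω in (0 : ℝ)..(2 * Real.pi),
        (2 * Real.log ‖p.eval (circleMap 0 1 ω)‖ + Real.log (S ω)) ≤
      ∫ ω in (0 : ℝ)..(2 * Real.pi),
        (c⁻¹ * (‖p.eval (circleMap 0 1 ω)‖ ^ 2 * S ω) + (Real.log c - 1)) := by
    refine integral_mono_ae_restrict hπ.le ((hlogp.const_mul 2).add hlogS)
      ((by fun_prop : Continuous _).intervalIntegrable _ _) ?_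
    filter_upwards [ae_restrict_mem measurableSet_Icc, ae_restrict_of_ae hne] with ω hω hω0
    have hSω := hpos ω hω
    have hpω := norm_pos_iff.2 hω0
    have h := Real.log_le_sub_one_of_pos
      (show 0 < c⁻¹ * (‖p.eval (circleMap 0 1 ω)‖ ^ 2 * S ω) by positivity)
    rw [Real.log_mul (by positivity) (by positivity), Real.log_mul (by positivity) hSω.ne',
      Real.log_inv, Real.log_pow] at h
    push_cast at h
    linarith
  rw [integral_add (hlogp.const_mul 2) hlogS, intervalIntegral.integral_const_mul,
    integral_add ((hcont.const_mul c⁻¹).intervalIntegrable _ _) intervalIntegrable_const,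
    intervalIntegral.integral_const_mul, intervalIntegral.integral_const] at hle
  have hint : ∫ ω in (0 : ℝ)..(2 * Real.pi), ‖p.eval (circleMap 0 1 ω)‖ ^ 2 * S ω =
      2 * Real.pi * c := by
    rw [hc, mul_inv_cancel_left₀ hπ.ne']
  rw [hint, show c⁻¹ * (2 * Real.pi * c) = 2 * Real.pi by field_simp, smul_eq_mul] at hle
  rw [← Real.le_log_iff_exp_le hcpos, inv_mul_le_iff₀ hπ]
  linarith

theorem integral_cos_int_mul (k : ℤ) :
    ∫ ω in (0 : ℝ)..(2 * Real.pi), Real.cos (k * ω) = if k = 0 then 2 * Real.pi else 0 := by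
  split_ifs with hk
  · simp [hk]
  · have hk' : (k : ℝ) ≠ 0 := by exact_mod_cast hk
    have h : Real.sin (k * (2 * Real.pi)) = 0 := by
      simpa using Real.sin_add_int_mul_two_pi 0 k
    rw [integral_comp_mul_left (fun x ↦ Real.cos x) hk']
    simp [h]

theorem integral_cos_int_mul_mul_cos_int_mul (k l : ℤ) :
    ∫ ω in (0 : ℝ)..(2 * Real.pi), Real.cos (k * ω) * Real.cos (l * ω) =
      (if k = l then Real.pi else 0) + if k = -l then Real.pi else 0 := by
  have h (ω : ℝ) : Real.cos (k * ω) * Real.cos (l * ω) =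
      2⁻¹ * (Real.cos ((k - l : ℤ) * ω) + Real.cos ((k + l : ℤ) * ω)) := by
    push_cast
    rw [sub_mul, add_mul, Real.cos_sub, Real.cos_add]
    ring
  simp_rw [h]
  rw [intervalIntegral.integral_const_mul,
    integral_add ((by fun_prop : Continuous _).intervalIntegrable _ _)
      ((by fun_prop : Continuous _).intervalIntegrable _ _), integral_cos_int_mul,
    integral_cos_int_mul]
  simp only [sub_eq_zero, add_eq_zero_iff_eq_neg]
  split_ifs <;> ring

/-- The cosine Fourier coefficients of an even trigonometric polynomial. -/
theorem integral_cos_int_mul_mul_sum {r : ℤ → ℝ} (hsymm : ∀ τ : ℤ, r (-τ) = r τ) {s : Finset ℤ}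
    (hs : ∀ τ ∉ s, r τ = 0) (k : ℤ) :
    ∫ ω in (0 : ℝ)..(2 * Real.pi), Real.cos (k * ω) * ∑ τ ∈ s, r τ * Real.cos (τ * ω) =
      2 * Real.pi * r k := by
  have h (ω : ℝ) : Real.cos (k * ω) * ∑ τ ∈ s, r τ * Real.cos (τ * ω) =
      ∑ τ ∈ s, r τ * (Real.cos (k * ω) * Real.cos (τ * ω)) := by
    rw [Finset.mul_sum]
    exact Finset.sum_congr rfl fun _ _ ↦ by ring
  have hsum (l : ℤ) : ∑ τ ∈ s, r τ * (if l = τ then Real.pi else 0) = r l * Real.pi := by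
    by_cases hl : l ∈ s
    · simp [hl]
    · simp [hl, hs l hl]
  simp_rw [h]
  rw [integral_finsetSum fun _ _ ↦ (by fun_prop : Continuous _).intervalIntegrable _ _]
  simp_rw [intervalIntegral.integral_const_mul, integral_cos_int_mul_mul_cos_int_mul, mul_add,
    eq_neg_iff_add_eq_zero (a := k), ← neg_eq_iff_add_eq_zero]
  rw [Finset.sum_add_distrib, hsum, hsum, hsymm]
  ring

theorem norm_sq_sum_mul_circleMap_pow {n : ℕ} (u : Fin n → ℝ) (ω : ℝ) :
    ‖∑ i, (u i : ℂ) * circleMap 0 1 ω ^ (i : ℕ)‖ ^ 2 =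
      ∑ i, ∑ j, u i * u j * Real.cos (((i : ℤ) - (j : ℤ) : ℤ) * ω) := by
  have hpow (k : ℕ) : circleMap 0 1 ω ^ k = Real.cos (k * ω) + Real.sin (k * ω) * Complex.I := by
    rw [circleMap_zero, Complex.ofReal_one, one_mul, ← Complex.exp_nat_mul, ← mul_assoc,
      Complex.exp_mul_I]
    push_cast
    rfl
  have hre : (∑ i, (u i : ℂ) * circleMap 0 1 ω ^ (i : ℕ)).re =
      ∑ i, u i * Real.cos ((i : ℕ) * ω) := by
    rw [Complex.re_sum]
    refine Finset.sum_congr rfl fun i _ ↦ ?_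
    rw [hpow, Complex.re_ofReal_mul, Complex.add_re, Complex.ofReal_re, Complex.re_ofReal_mul]
    simp
  have him : (∑ i, (u i : ℂ) * circleMap 0 1 ω ^ (i : ℕ)).im =
      ∑ i, u i * Real.sin ((i : ℕ) * ω) := by
    rw [Complex.im_sum]
    refine Finset.sum_congr rfl fun i _ ↦ ?_
    rw [hpow, Complex.im_ofReal_mul, Complex.add_im, Complex.ofReal_im, Complex.im_ofReal_mul]
    simp
  rw [Complex.sq_norm, Complex.normSq_apply, hre, him, Finset.sum_mul_sum, Finset.sum_mul_sum,
    ← Finset.sum_add_distrib]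
  refine Finset.sum_congr rfl fun i _ ↦ ?_
  rw [← Finset.sum_add_distrib]
  refine Finset.sum_congr rfl fun j _ ↦ ?_
  push_cast
  rw [sub_mul, Real.cos_sub]
  ring

/-- The quadratic form of a Toeplitz matrix as an integral against its symbol. -/
theorem integral_norm_sq_mul_symbol {r : ℤ → ℝ} (hsymm : ∀ τ : ℤ, r (-τ) = r τ) {s : Finset ℤ}
    (hs : ∀ τ ∉ s, r τ = 0) {n : ℕ} (u : Fin n → ℝ) :
    ∫ ω in (0 : ℝ)..(2 * Real.pi), ‖∑ i, (u i : ℂ) * circleMap 0 1 ω ^ (i : ℕ)‖ ^ 2 *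
        ∑ τ ∈ s, r τ * Real.cos (τ * ω) =
      2 * Real.pi * (u ⬝ᵥ (Matrix.of fun i j : Fin n => r ((i : ℤ) - (j : ℤ))) *ᵥ u) := by
  simp_rw [norm_sq_sum_mul_circleMap_pow, Finset.sum_mul, mul_assoc]
  rw [integral_finsetSum fun _ _ ↦ (by fun_prop : Continuous _).intervalIntegrable _ _]
  simp_rw [dotProduct, mulVec, dotProduct, Finset.mul_sum]
  refine Finset.sum_congr rfl fun i _ ↦ ?_
  rw [integral_finsetSum fun _ _ ↦ (by fun_prop : Continuous _).intervalIntegrable _ _]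
  refine Finset.sum_congr rfl fun j _ ↦ ?_
  simp_rw [← Finset.mul_sum]
  rw [intervalIntegral.integral_const_mul, intervalIntegral.integral_const_mul,
    integral_cos_int_mul_mul_sum hsymm hs]
  simp only [of_apply]
  ring

/-- A nonzero leading principal minor splits off from the determinant of a matrix, the cofactor
being a value of the quadratic form at a vector with last coordinate one. -/
theorem exists_det_eq_det_mul_dotProduct_mulVec {K : Type*} [Field K] {n : ℕ}
    (A : Matrix (Fin (n + 1)) (Fin (n + 1)) K)
    (hA : (A.submatrix Fin.castSucc Fin.castSucc).det ≠ 0) :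
    ∃ u : Fin (n + 1) → K, u (Fin.last n) = 1 ∧
      A.det = (A.submatrix Fin.castSucc Fin.castSucc).det * (u ⬝ᵥ A *ᵥ u) := by
  set d := (A.submatrix Fin.castSucc Fin.castSucc).det with hd
  have hlast : A.cramer (Pi.single (Fin.last n) 1) (Fin.last n) = d := by
    rw [cramer_eq_adjugate_mulVec, mulVec_single_one, col_apply, adjugate_fin_succ_eq_det_submatrix]
    simp [hd, Fin.succAbove_last, ← two_mul]
  refine ⟨d⁻¹ • A.cramer (Pi.single (Fin.last n) 1), by simp [hlast, hA], ?_⟩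
  rw [mulVec_smul, mulVec_cramer, smul_dotProduct, dotProduct_smul, dotProduct_smul,
    dotProduct_single_one, hlast]
  simp only [smul_eq_mul]
  field_simp

theorem exp_average_log_symbol_le_dotProduct_mulVec {r : ℤ → ℝ} (hsymm : ∀ τ : ℤ, r (-τ) = r τ)
    {s : Finset ℤ} (hs : ∀ τ ∉ s, r τ = 0)
    (hpos : ∀ ω ∈ Set.Icc (0 : ℝ) (2 * Real.pi), 0 < ∑ τ ∈ s, r τ * Real.cos (τ * ω))
    {n : ℕ} {u : Fin (n + 1) → ℝ} (hu : u (Fin.last n) = 1) :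
    Real.exp ((2 * Real.pi)⁻¹ * ∫ ω in (0 : ℝ)..(2 * Real.pi),
        Real.log (∑ τ ∈ s, r τ * Real.cos (τ * ω))) ≤
      u ⬝ᵥ (Matrix.of fun i j : Fin (n + 1) => r ((i : ℤ) - (j : ℤ))) *ᵥ u := by
  set p : ℂ[X] := ∑ i : Fin (n + 1), C (u i : ℂ) * X ^ (i : ℕ) with hp
  have hmonic : p.Monic := by
    rw [hp, Fin.sum_univ_castSucc, hu, add_comm]
    simp only [Complex.ofReal_one, C_1, one_mul, Fin.val_last, Fin.val_castSucc]
    exact monic_X_pow_add (degree_sum_fin_lt fun i : Fin n ↦ (u i.castSucc : ℂ))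
  have heval (z : ℂ) : p.eval z = ∑ i, (u i : ℂ) * z ^ (i : ℕ) := by
    simp [hp, eval_finsetSum]
  have h := exp_average_log_le_average_norm_sq_mul hmonic (by fun_prop) hpos
  simp_rw [heval] at h
  rwa [integral_norm_sq_mul_symbol hsymm hs, inv_mul_cancel_left₀ Real.two_pi_pos.ne'] at h

/-- Szegő-type lower bound on Toeplitz determinants: if `r` is a finitely supported
even autocorrelation sequence whose symbol `S(ω) = Σ_{τ ∈ ℤ} r τ · cos (τ ω)` is
positive on `[0, 2π]`, then for every `n ≥ 1` the `n × n` Toeplitz matrix `T_n(r)`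
satisfies `det T_n(r) ≥ exp ((n / (2π)) ∫_0^{2π} log S(ω) dω)`. -/
theorem toeplitz_det_ge_exp_integral_log_symbol
    (r : ℤ → ℝ) (hsymm : ∀ τ : ℤ, r (-τ) = r τ)
    (N : ℕ) (hsupp : ∀ τ : ℤ, (N : ℤ) ≤ |τ| → r τ = 0)
    (hpos : ∀ ω ∈ Set.Icc (0 : ℝ) (2 * Real.pi),
      0 < ∑' τ : ℤ, r τ * Real.cos ((τ : ℝ) * ω))
    (n : ℕ) (hn : 1 ≤ n) :
    Real.exp (((n : ℝ) / (2 * Real.pi)) *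
        ∫ ω in (0 : ℝ)..(2 * Real.pi),
          Real.log (∑' τ : ℤ, r τ * Real.cos ((τ : ℝ) * ω))) ≤
      (Matrix.of fun i j : Fin n => r ((i : ℤ) - (j : ℤ))).det := by
  clear hn
  have hs : ∀ τ ∉ Finset.Icc (-(N : ℤ)) N, r τ = 0 := fun τ hτ ↦ hsupp τ <| by
    by_contra! h
    exact hτ (Finset.mem_Icc.2 (abs_le.1 h.le))
  have htsum (ω : ℝ) : ∑' τ : ℤ, r τ * Real.cos ((τ : ℝ) * ω) =
      ∑ τ ∈ Finset.Icc (-(N : ℤ)) N, r τ * Real.cos ((τ : ℝ) * ω) :=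
    tsum_eq_sum fun τ hτ ↦ by rw [hs τ hτ, zero_mul]
  simp_rw [htsum] at hpos ⊢
  induction n with
  | zero => simp
  | succ n ih =>
    obtain ⟨u, hu, hdet⟩ := exists_det_eq_det_mul_dotProduct_mulVec
      (Matrix.of fun i j : Fin (n + 1) => r ((i : ℤ) - (j : ℤ)))
      ((Real.exp_pos _).trans_le ih).ne'
    rw [hdet, Nat.cast_succ, add_div, add_mul, Real.exp_add, one_div]
    exact mul_le_mul ih (exp_average_log_symbol_le_dotProduct_mulVec hsymm hs hpos hu)
      (Real.exp_pos _).le ((Real.exp_pos _).le.trans ih)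
end
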